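/- arXiv:1805.04192 — 3 statements merged into one kernel-verified Lean document; each statement's English description precedes it below -/
import Mathlib

section
/- Let n ≥ 1, let p > 1 be a real number, and let f : ℝⁿ → ℝ be a continuously differentiable, non-negative function that is weakly subharmonic, meaning that for every non-negative smooth compactly supported test function ψ : ℝⁿ → ℝ one has ∫ ⟪∇f(x), ∇ψ(x)⟫ dx ≤ 0. Then for every non-negative smooth compactly supported φ : ℝⁿ → ℝ one has the Caccioppoli-type inequality (p−1)² ∫ f(x)^{p−2} φ(x)² ‖∇f(x)‖² dx ≤ 4 ∫ f(x)^p ‖∇φ(x)‖² dx, where for 1 < p < 2 the integrand on the left is interpreted as 0 at points where f vanishes. (This is the key displayed inequality in the proof of the paper's Proposition 2.1.) -/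
open MeasureTheory Metric Real Filter Asymptotics RealInnerProductSpace

noncomputable section

/-- `f` is weakly subharmonic: `∫ ⟪∇f, ∇ψ⟫ ≤ 0` for every non-negative smooth
compactly supported test function `ψ`. -/
def WeaklySubharmonic {n : ℕ} (f : EuclideanSpace ℝ (Fin n) → ℝ) : Prop :=
  ∀ ψ : EuclideanSpace ℝ (Fin n) → ℝ, ContDiff ℝ (⊤ : ℕ∞) ψ → HasCompactSupport ψ →
    (∀ x, 0 ≤ ψ x) → ∫ x, ⟪gradient f x, gradient ψ x⟫ ≤ 0

/-!
For positive `u`, subharmonicity is tested against `ψ = φ² u^(p-1)`, for which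
`⟪∇u, ∇ψ⟫ = 2 φ u^(p-1) ⟪∇u, ∇φ⟫ + (p-1) φ² u^(p-2) ‖∇u‖²`. Completing the square
`u^(p-2) ‖(p-1) φ ∇u + 2 u ∇φ‖² ≥ 0` absorbs the mixed term. This `ψ` is only `C¹`, so the weak
inequality is first extended from smooth to `C¹` test functions by mollification.

A non-negative `f` is handled through `u = f + ε`. As `ε → 0`, the right-hand sides converge and
Fatou's lemma bounds the left-hand side. Where `f` vanishes it attains its minimum, so `∇f = 0`
there and the integrands converge even when `p < 2` and `f^(p-2)` degenerates.
-/

open scoped Topology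

section Fatou

variable {α ι : Type*} [MeasurableSpace α] {μ : Measure α}

theorem integrable_and_integral_le_of_tendsto {l : Filter ι} [l.NeBot] [l.IsCountablyGenerated]
    {F : ι → α → ℝ} {g : α → ℝ} {b : ι → ℝ} {B : ℝ}
    (hF : ∀ i, Integrable (F i) μ) (hF0 : ∀ i, 0 ≤ᵐ[μ] F i)
    (hFg : ∀ᵐ x ∂μ, Tendsto (F · x) l (𝓝 (g x)))
    (hFb : ∀ i, ∫ x, F i x ∂μ ≤ b i) (hb : Tendsto b l (𝓝 B)) :
    Integrable g μ ∧ ∫ x, g x ∂μ ≤ B := by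
  have lintegral_F_le (i : ι) : ∫⁻ x, ‖F i x‖ₑ ∂μ ≤ ENNReal.ofReal (b i) := by
    rw [← ofReal_integral_norm_eq_lintegral_enorm (hF i),
      integral_congr_ae ((hF0 i).mono fun x hx => Real.norm_of_nonneg hx)]
    exact ENNReal.ofReal_le_ofReal (hFb i)
  have lintegral_g_le : ∫⁻ x, ‖g x‖ₑ ∂μ ≤ ENNReal.ofReal B := calc
    ∫⁻ x, ‖g x‖ₑ ∂μ = ∫⁻ x, liminf (fun i => ‖F i x‖ₑ) l ∂μ :=
      lintegral_congr_ae (hFg.mono fun x hx => hx.enorm.liminf_eq.symm)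
    _ ≤ liminf (fun i => ∫⁻ x, ‖F i x‖ₑ ∂μ) l :=
      lintegral_liminf_le' fun i => (hF i).aestronglyMeasurable.enorm
    _ ≤ liminf (fun i => ENNReal.ofReal (b i)) l :=
      liminf_le_liminf (.of_forall lintegral_F_le)
    _ = ENNReal.ofReal B := (ENNReal.tendsto_ofReal hb).liminf_eq
  have hB : 0 ≤ B :=
    ge_of_tendsto' hb fun i => (integral_nonneg_of_ae (hF0 i)).trans (hFb i)
  refine ⟨⟨aestronglyMeasurable_of_tendsto_ae l (fun i => (hF i).aestronglyMeasurable) hFg,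
    lintegral_g_le.trans_lt ENNReal.ofReal_lt_top⟩, ?_⟩
  calc ∫ x, g x ∂μ ≤ ‖∫ x, g x ∂μ‖ := le_norm_self _
    _ ≤ (∫⁻ x, ‖g x‖ₑ ∂μ).toReal := by
      simpa only [ofReal_norm] using norm_integral_le_lintegral_norm g
    _ ≤ B := ENNReal.toReal_le_of_le_ofReal hB lintegral_g_le

end Fatou

section OperatorFields

variable {X E F : Type*} [NormedAddCommGroup E] [NormedSpace ℝ E]
  [NormedAddCommGroup F] [NormedSpace ℝ F] [MeasurableSpace X] {μ : Measure X}
  {L : X → E →L[ℝ] F} {V : X → E}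

theorem integrable_clm_apply_of_hasCompactSupport [TopologicalSpace X]
    [TopologicalSpace.MetrizableSpace X]
    [OpensMeasurableSpace X] (hV : LocallyIntegrable V μ) (hL : Continuous L)
    (hLc : HasCompactSupport L) :
    Integrable (fun x => L x (V x)) μ := by
  obtain ⟨C, hC⟩ := hL.bounded_above_of_compact_support hLc
  have support_subset : Function.support (fun x => L x (V x)) ⊆ tsupport L :=
    Function.support_subset_iff'.2 fun x hx => by
      rw [image_eq_zero_of_notMem_tsupport hx, zero_apply]
  rw [← integrableOn_iff_integrable_of_support_subset support_subset]
  exact (ContinuousLinearMap.id ℝ (E →L[ℝ] F)).integrable_of_bilin_of_bdd_left C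
    (hL.continuousOn.aestronglyMeasurable_of_isCompact hLc (isClosed_tsupport L).measurableSet)
    (.of_forall hC) (hV.integrableOn_isCompact hLc)

theorem norm_integral_clm_apply_le_mul_setIntegral_norm {K : Set X} {η : ℝ}
    (hV : IntegrableOn V K μ)
    (hLK : ∀ x ∉ K, L x = 0) (hLη : ∀ x, ‖L x‖ ≤ η) :
    ‖∫ x, L x (V x) ∂μ‖ ≤ η * ∫ x in K, ‖V x‖ ∂μ := by
  rw [← setIntegral_eq_integral_of_forall_compl_eq_zero (s := K) fun x hx => by
    rw [hLK x hx, zero_apply], ← integral_const_mul]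
  exact norm_integral_le_of_norm_le (hV.norm.const_mul η)
    (.of_forall fun x => (L x).le_of_opNorm_le (hLη x) (V x))

end OperatorFields

theorem fderiv_convolution_lsmul {E F : Type*} [NormedAddCommGroup E] [NormedSpace ℝ E]
    [MeasurableSpace E] [BorelSpace E] {μ : Measure E} [SFinite μ] [μ.IsAddLeftInvariant]
    [NormedAddCommGroup F] [NormedSpace ℝ F] {g : E → ℝ} {ψ : E → F}
    (hg : LocallyIntegrable g μ) (hψ : ContDiff ℝ 1 ψ) (hψc : HasCompactSupport ψ) (x : E) :
    fderiv ℝ (convolution g ψ (ContinuousLinearMap.lsmul ℝ ℝ) μ) x =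
      convolution g (fderiv ℝ ψ) (ContinuousLinearMap.lsmul ℝ ℝ) μ x := by
  rw [(hψc.hasFDerivAt_convolution_right _ hg hψ x).fderiv]
  rfl

section TestFunctions

variable {E : Type*} [NormedAddCommGroup E] [NormedSpace ℝ E] [FiniteDimensional ℝ E] {ψ : E → ℝ}

open scoped Pointwise in
theorem exists_smooth_nonneg_norm_fderiv_sub_le (hψ : ContDiff ℝ 1 ψ) (hψc : HasCompactSupport ψ)
    (hψ0 : ∀ x, 0 ≤ ψ x) {δ η : ℝ} (hδ : 0 < δ) (hη : 0 < η) :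
    ∃ χ : E → ℝ, ContDiff ℝ (⊤ : ℕ∞) χ ∧ (∀ x, 0 ≤ χ x) ∧
      tsupport χ ⊆ cthickening δ (tsupport ψ) ∧ ∀ x, ‖fderiv ℝ ψ x - fderiv ℝ χ x‖ ≤ η := by
  borelize E
  have hψ' : Continuous (fderiv ℝ ψ) := hψ.continuous_fderiv one_ne_zero
  obtain ⟨r, hr, hψr⟩ := Metric.uniformContinuous_iff.1
    ((hψc.fderiv ℝ).uniformContinuous_of_continuous hψ') η hη
  have hρ : 0 < min r δ := lt_min hr hδ
  let b : ContDiffBump (0 : E) := ⟨min r δ / 2, min r δ, half_pos hρ, half_lt_self hρ⟩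
  let χ : E → ℝ := convolution (b.normed .addHaar) ψ (ContinuousLinearMap.lsmul ℝ ℝ) .addHaar
  have support_χ : Function.support χ ⊆ thickening δ (tsupport ψ) := calc
    Function.support χ ⊆ tsupport ψ + ball 0 (min r δ) := by
      refine (support_convolution_subset_swap _).trans ?_
      rw [b.support_normed_eq]
      exact Set.add_subset_add_right (subset_tsupport ψ)
    _ = thickening (min r δ) (tsupport ψ) := add_ball_zero _ _
    _ ⊆ thickening δ (tsupport ψ) := thickening_mono (min_le_right _ _) _
  refine ⟨χ, b.hasCompactSupport_normed.contDiff_convolution_left _ b.contDiff_normed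
      hψ.continuous.locallyIntegrable,
    fun x => integral_nonneg fun t => mul_nonneg (b.nonneg_normed t) (hψ0 _),
    (closure_mono support_χ).trans (closure_thickening_subset_cthickening _ _), fun x => ?_⟩
  rw [← dist_eq_norm, dist_comm,
    fderiv_convolution_lsmul b.continuous_normed.locallyIntegrable hψ hψc]
  exact b.dist_normed_convolution_le hψ'.aestronglyMeasurable fun y hy =>
    (hψr (hy.trans_le (min_le_left _ _))).le

theorem integral_fderiv_apply_nonpos [MeasurableSpace E] [BorelSpace E] {μ : Measure E}
    {V : E → E} (hV : LocallyIntegrable V μ)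
    (hsmooth : ∀ χ : E → ℝ, ContDiff ℝ (⊤ : ℕ∞) χ → HasCompactSupport χ → (∀ x, 0 ≤ χ x) →
      ∫ x, fderiv ℝ χ x (V x) ∂μ ≤ 0)
    (hψ : ContDiff ℝ 1 ψ) (hψc : HasCompactSupport ψ) (hψ0 : ∀ x, 0 ≤ ψ x) :
    ∫ x, fderiv ℝ ψ x (V x) ∂μ ≤ 0 := by
  set K := cthickening 1 (tsupport ψ)
  have hK : IsCompact K := hψc.isCompact.cthickening
  have integrable_fderiv {χ : E → ℝ} (hχ : ContDiff ℝ 1 χ) (hχc : HasCompactSupport χ) :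
      Integrable (fun x => fderiv ℝ χ x (V x)) μ :=
    integrable_clm_apply_of_hasCompactSupport hV (hχ.continuous_fderiv one_ne_zero) (hχc.fderiv ℝ)
  have bound (η : ℝ) (hη : 0 < η) : ∫ x, fderiv ℝ ψ x (V x) ∂μ ≤ η * ∫ x in K, ‖V x‖ ∂μ := by
    obtain ⟨χ, hχ, hχ0, hχK, hχψ⟩ :=
      exists_smooth_nonneg_norm_fderiv_sub_le hψ hψc hψ0 one_pos hη
    have hχc : HasCompactSupport χ := hK.of_isClosed_subset (isClosed_tsupport χ) hχK
    have sub_eq_zero (x : E) (hx : x ∉ K) : fderiv ℝ ψ x - fderiv ℝ χ x = 0 := by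
      rw [fderiv_of_notMem_tsupport ℝ fun h => hx (self_subset_cthickening _ h),
        fderiv_of_notMem_tsupport ℝ fun h => hx (hχK h), sub_self]
    calc ∫ x, fderiv ℝ ψ x (V x) ∂μ
        ≤ ∫ x, fderiv ℝ ψ x (V x) ∂μ - ∫ x, fderiv ℝ χ x (V x) ∂μ :=
          le_sub_self_iff _ |>.2 (hsmooth χ hχ hχc hχ0)
      _ = ∫ x, (fderiv ℝ ψ x - fderiv ℝ χ x) (V x) ∂μ :=
          (integral_sub (integrable_fderiv hψ hψc)
            (integrable_fderiv (hχ.of_le (by exact_mod_cast le_top)) hχc)).symm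
      _ ≤ η * ∫ x in K, ‖V x‖ ∂μ := (le_norm_self _).trans <|
          norm_integral_clm_apply_le_mul_setIntegral_norm (hV.integrableOn_isCompact hK)
            sub_eq_zero hχψ
  have limit : Tendsto (fun η : ℝ => η * ∫ x in K, ‖V x‖ ∂μ) (𝓝[>] 0) (𝓝 0) := by
    simpa only [id, zero_mul] using
      (tendsto_id.mono_left (nhdsWithin_le_nhds (a := (0 : ℝ)))).mul_const (∫ x in K, ‖V x‖ ∂μ)
  exact ge_of_tendsto limit (eventually_mem_nhdsWithin.mono bound)

end TestFunctions

theorem caccioppoli_pointwise {F : Type*} [NormedAddCommGroup F] [InnerProductSpace ℝ F]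
    (p s : ℝ) {t : ℝ} (ht : 0 < t) (a b : F) :
    (p - 1) ^ 2 * (t ^ (p - 2) * s ^ 2 * ‖a‖ ^ 2) - 4 * (t ^ p * ‖b‖ ^ 2) ≤
      2 * (p - 1) * ⟪a, (2 * s * t ^ (p - 1)) • b + ((p - 1) * s ^ 2 * t ^ (p - 2)) • a⟫ := by
  have rpow_sub_one : t ^ (p - 1) = t ^ (p - 2) * t := by
    rw [← rpow_add_one ht.ne']; ring_nf
  have rpow_self : t ^ p = t ^ (p - 2) * t ^ 2 := by
    rw [← rpow_add_natCast ht.ne']; norm_num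
  have square_nonneg : 0 ≤ t ^ (p - 2) * ‖((p - 1) * s) • a + (2 * t) • b‖ ^ 2 := by positivity
  rw [norm_add_sq_real, norm_smul, norm_smul, mul_pow, mul_pow, real_inner_smul_left,
    real_inner_smul_right, norm_eq_abs, norm_eq_abs, sq_abs, sq_abs] at square_nonneg
  rw [inner_add_right, real_inner_smul_right, real_inner_smul_right, real_inner_self_eq_norm_sq,
    rpow_sub_one, rpow_self]
  linarith

section Gradient

variable {F : Type*} [NormedAddCommGroup F] [InnerProductSpace ℝ F] [CompleteSpace F]
  {u φ : F → ℝ} {x : F}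

theorem continuous_gradient (hu : ContDiff ℝ 1 u) : Continuous (gradient u) :=
  (InnerProductSpace.toDual ℝ F).symm.continuous.comp (hu.continuous_fderiv one_ne_zero)

theorem hasCompactSupport_gradient (hu : HasCompactSupport u) : HasCompactSupport (gradient u) :=
  (hu.fderiv ℝ).comp_left (map_zero (InnerProductSpace.toDual ℝ F).symm)

theorem gradient_eq_zero_of_isLocalMin (h : IsLocalMin u x) : gradient u x = 0 := by
  simp only [gradient, h.fderiv_eq_zero, map_zero]

theorem gradient_add_const (u : F → ℝ) (c : ℝ) : gradient (fun x => u x + c) = gradient u := by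
  ext1 x
  simp only [gradient, fderiv_add_const]

theorem gradient_sq_mul_rpow (hφ : DifferentiableAt ℝ φ x) (hu : DifferentiableAt ℝ u x)
    (hux : u x ≠ 0) (q : ℝ) :
    gradient (fun y => φ y ^ 2 * u y ^ q) x =
      (2 * φ x * u x ^ q) • gradient φ x + (q * φ x ^ 2 * u x ^ (q - 1)) • gradient u x := by
  have fderiv_eq : fderiv ℝ (fun y => φ y ^ 2 * u y ^ q) x = _ :=
    ((hφ.hasFDerivAt.pow 2).mul (hu.hasFDerivAt.rpow_const (p := q) (.inl hux))).fderiv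
  rw [gradient, fderiv_eq, map_add, add_comm]
  simp only [gradient, map_smul, smul_smul, nsmul_eq_mul, Nat.cast_ofNat, Nat.add_one_sub_one,
    pow_one]
  ring_nf

theorem integrable_rpow_mul_sq_mul_sq_norm_gradient [MeasurableSpace F] [OpensMeasurableSpace F]
    {μ : Measure F} [IsFiniteMeasureOnCompacts μ] (hu : ContDiff ℝ 1 u) (hu0 : ∀ x, u x ≠ 0)
    (hφ : Continuous φ) (hφc : HasCompactSupport φ) (q : ℝ) :
    Integrable (fun x => u x ^ q * φ x ^ 2 * ‖gradient u x‖ ^ 2) μ := by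
  have hpow : Continuous fun x => u x ^ q := hu.continuous.rpow_const fun x => .inl (hu0 x)
  exact ((hpow.mul (hφ.pow 2)).mul ((continuous_gradient hu).norm.pow 2))
    |>.integrable_of_hasCompactSupport (hφc.mono fun x hx hφx => hx (by simp [hφx]))

theorem tendsto_add_rpow_mul_sq_norm_gradient {ι : Type*} {l : Filter ι} {ε : ι → ℝ}
    (hu0 : ∀ x, 0 ≤ u x) (hε : Tendsto ε l (𝓝 0)) (q c : ℝ) (x : F) :
    Tendsto (fun i => (u x + ε i) ^ q * c * ‖gradient u x‖ ^ 2) l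
      (𝓝 (u x ^ q * c * ‖gradient u x‖ ^ 2)) := by
  by_cases hx : u x = 0
  · have hgrad : gradient u x = 0 :=
      gradient_eq_zero_of_isLocalMin (.of_forall fun y => hx.trans_le (hu0 y))
    simpa [hgrad] using tendsto_const_nhds
  · have hadd : Tendsto (fun i => u x + ε i) l (𝓝 (u x)) := by
      simpa only [add_zero] using hε.const_add (u x)
    exact ((hadd.rpow_const (.inl hx)).mul_const _).mul_const _

end Gradient

theorem continuous_integral_add_rpow_mul {X : Type*} [TopologicalSpace X] [MeasurableSpace X]
    [OpensMeasurableSpace X] {μ : Measure X} [IsFiniteMeasureOnCompacts μ] {u w : X → ℝ}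
    (hu : Continuous u) (hw : Continuous w) (hwc : HasCompactSupport w) {p : ℝ} (hp : 0 ≤ p) :
    Continuous fun ε : ℝ => ∫ x, (u x + ε) ^ p * w x ∂μ := by
  rw [← continuousOn_univ]
  refine continuousOn_integral_of_compact_support hwc.isCompact (Continuous.continuousOn ?_)
    fun ε x _ hx => ?_
  · have := Real.continuous_rpow_const hp
    fun_prop
  · rw [image_eq_zero_of_notMem_tsupport hx, mul_zero]

namespace WeaklySubharmonic

variable {n : ℕ} {u φ ψ : EuclideanSpace ℝ (Fin n) → ℝ}

theorem add_const (hu : WeaklySubharmonic u) (c : ℝ) : WeaklySubharmonic fun x => u x + c := by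
  simpa only [WeaklySubharmonic, gradient_add_const] using hu

theorem integral_inner_gradient_nonpos (hsub : WeaklySubharmonic u) (hu : ContDiff ℝ 1 u)
    (hψ : ContDiff ℝ 1 ψ) (hψc : HasCompactSupport ψ) (hψ0 : ∀ x, 0 ≤ ψ x) :
    ∫ x, ⟪gradient u x, gradient ψ x⟫ ≤ 0 := by
  simp only [WeaklySubharmonic, inner_gradient_right, conj_trivial] at hsub ⊢
  exact integral_fderiv_apply_nonpos (continuous_gradient hu).locallyIntegrable hsub hψ hψc hψ0

theorem caccioppoli_of_pos (hsub : WeaklySubharmonic u) (hu : ContDiff ℝ 1 u)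
    (hu0 : ∀ x, 0 < u x) (hφ : ContDiff ℝ 1 φ) (hφc : HasCompactSupport φ) {p : ℝ} (hp : 1 ≤ p) :
    (p - 1) ^ 2 * ∫ x, u x ^ (p - 2) * φ x ^ 2 * ‖gradient u x‖ ^ 2 ≤
      4 * ∫ x, u x ^ p * ‖gradient φ x‖ ^ 2 := by
  set ψ : EuclideanSpace ℝ (Fin n) → ℝ := fun x => φ x ^ 2 * u x ^ (p - 1) with hψ_def
  have hψ : ContDiff ℝ 1 ψ := (hφ.pow 2).mul (hu.rpow_const_of_ne fun x => (hu0 x).ne')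
  have hψc : HasCompactSupport ψ := hφc.mono fun x hx hφx => hx (by simp [hψ_def, hφx])
  have hψ0 (x) : 0 ≤ ψ x := mul_nonneg (sq_nonneg _) (rpow_nonneg (hu0 x).le _)
  have hleft : Integrable fun x => u x ^ (p - 2) * φ x ^ 2 * ‖gradient u x‖ ^ 2 :=
    integrable_rpow_mul_sq_mul_sq_norm_gradient hu (fun x => (hu0 x).ne') hφ.continuous hφc _
  have hright : Integrable fun x => u x ^ p * ‖gradient φ x‖ ^ 2 :=
    ((hu.continuous.rpow_const fun x => .inl (hu0 x).ne').mul
      ((continuous_gradient hφ).norm.pow 2)).integrable_of_hasCompactSupport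
      ((hasCompactSupport_gradient hφc).mono fun x hx hφx => hx (by simp [hφx]))
  have htest : Integrable fun x => ⟪gradient u x, gradient ψ x⟫ :=
    ((continuous_gradient hu).inner (continuous_gradient hψ)).integrable_of_hasCompactSupport
      ((hasCompactSupport_gradient hψc).mono fun x hx hψx => hx (by simp [hψx]))
  have pointwise (x) :
      (p - 1) ^ 2 * (u x ^ (p - 2) * φ x ^ 2 * ‖gradient u x‖ ^ 2) -
        4 * (u x ^ p * ‖gradient φ x‖ ^ 2) ≤ 2 * (p - 1) * ⟪gradient u x, gradient ψ x⟫ := by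
    rw [gradient_sq_mul_rpow (hφ.differentiable one_ne_zero x) (hu.differentiable one_ne_zero x)
      (hu0 x).ne', show p - 1 - 1 = p - 2 by ring]
    exact caccioppoli_pointwise p (φ x) (hu0 x) _ _
  rw [← sub_nonpos]
  calc (p - 1) ^ 2 * (∫ x, u x ^ (p - 2) * φ x ^ 2 * ‖gradient u x‖ ^ 2)
        - 4 * ∫ x, u x ^ p * ‖gradient φ x‖ ^ 2
      = ∫ x, ((p - 1) ^ 2 * (u x ^ (p - 2) * φ x ^ 2 * ‖gradient u x‖ ^ 2) -
          4 * (u x ^ p * ‖gradient φ x‖ ^ 2)) := by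
        rw [integral_sub (hleft.const_mul _) (hright.const_mul _), integral_const_mul,
          integral_const_mul]
    _ ≤ ∫ x, 2 * (p - 1) * ⟪gradient u x, gradient ψ x⟫ :=
        integral_mono ((hleft.const_mul _).sub (hright.const_mul _)) (htest.const_mul _) pointwise
    _ = 2 * (p - 1) * ∫ x, ⟪gradient u x, gradient ψ x⟫ := integral_const_mul _ _
    _ ≤ 0 := mul_nonpos_of_nonneg_of_nonpos (by linarith)
        (hsub.integral_inner_gradient_nonpos hu hψ hψc hψ0)

end WeaklySubharmonic

theorem stmt_5_general {n : ℕ} {p : ℝ} (hp : 1 < p) {f φ : EuclideanSpace ℝ (Fin n) → ℝ}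
    (hf : ContDiff ℝ 1 f) (hf0 : ∀ x, 0 ≤ f x) (hsub : WeaklySubharmonic f)
    (hφ : ContDiff ℝ 1 φ) (hφc : HasCompactSupport φ) :
    Integrable (fun x => f x ^ (p - 2) * φ x ^ 2 * ‖gradient f x‖ ^ 2) ∧
    (p - 1) ^ 2 * ∫ x, f x ^ (p - 2) * φ x ^ 2 * ‖gradient f x‖ ^ 2 ≤
      4 * ∫ x, f x ^ p * ‖gradient φ x‖ ^ 2 := by
  obtain ⟨ε, -, hε0, hε⟩ := exists_seq_strictAnti_tendsto (0 : ℝ)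
  have hfε (k : ℕ) : ContDiff ℝ 1 fun x => f x + ε k := hf.add contDiff_const
  have hfε0 (k : ℕ) (x) : 0 < f x + ε k := add_pos_of_nonneg_of_pos (hf0 x) (hε0 k)
  have integrable (k : ℕ) := integrable_rpow_mul_sq_mul_sq_norm_gradient (μ := volume) (hfε k)
    (fun x => (hfε0 k x).ne') hφ.continuous hφc (p - 2)
  have caccioppoli (k : ℕ) :=
    (hsub.add_const (ε k)).caccioppoli_of_pos (hfε k) (hfε0 k) hφ hφc hp.le
  simp only [gradient_add_const] at integrable caccioppoli
  have hright : Tendsto (fun k => 4 * ∫ x, (f x + ε k) ^ p * ‖gradient φ x‖ ^ 2) atTop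
      (𝓝 (4 * ∫ x, f x ^ p * ‖gradient φ x‖ ^ 2)) := by
    have hc := continuous_integral_add_rpow_mul (μ := volume) (w := fun x => ‖gradient φ x‖ ^ 2)
      hf.continuous ((continuous_gradient hφ).norm.pow 2)
      ((hasCompactSupport_gradient hφc).mono fun x hx hφx => hx (by simp [hφx]))
      (zero_le_one.trans hp.le)
    have h := ((hc.tendsto 0).comp hε).const_mul 4
    simp only [add_zero] at h
    exact h
  obtain ⟨hint, hle⟩ := integrable_and_integral_le_of_tendsto
    (fun k => (integrable k).const_mul ((p - 1) ^ 2))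
    (fun k => .of_forall fun x => by have := (hfε0 k x).le; positivity)
    (.of_forall fun x => (tendsto_add_rpow_mul_sq_norm_gradient hf0 hε _ _ x).const_mul _)
    (fun k => (integral_const_mul _ _).trans_le (caccioppoli k)) hright
  have hp0 : (p - 1) ^ 2 ≠ 0 := pow_ne_zero 2 (sub_pos.2 hp).ne'
  exact ⟨(integrable_const_mul_iff hp0.isUnit _).1 hint, by rwa [integral_const_mul] at hle⟩

theorem stmt_5 {n : ℕ} (hn : 1 ≤ n) (p : ℝ) (hp : 1 < p)
    (f : EuclideanSpace ℝ (Fin n) → ℝ)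
    (hf : ContDiff ℝ 1 f) (hf0 : ∀ x, 0 ≤ f x)
    (hsub : WeaklySubharmonic f)
    (φ : EuclideanSpace ℝ (Fin n) → ℝ) (hφ : ContDiff ℝ (⊤ : ℕ∞) φ)
    (hφc : HasCompactSupport φ) (hφ0 : ∀ x, 0 ≤ φ x) :
    (p - 1) ^ 2 * ∫ x, f x ^ (p - 2) * φ x ^ 2 * ‖gradient f x‖ ^ 2 ≤
      4 * ∫ x, f x ^ p * ‖gradient φ x‖ ^ 2 :=
  (stmt_5_general hp hf hf0 hsub (hφ.of_le (by exact_mod_cast le_top)) hφc).2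
end
end

section
/- Let n, m ≥ 1 and let u : ℝⁿ → ℝᵐ be a smooth map. Let Q = u(0), define the pull-back tensor at the origin by π_{ij}(0) = ⟪∂_i u(0), ∂_j u(0)⟫ and |π|²(0) = Σ_{i,j} π_{ij}(0)², and let ω_n denote the Lebesgue volume of the unit ball in ℝⁿ. Then, as σ → 0⁺, ∫_{B_σ(0)} ‖∇( y ↦ ‖u(y) − Q‖² )(x)‖² dx = (4 ω_n/(n+2)) · |π|²(0) · σ^{n+2} + o(σ^{n+2}), where B_σ(0) is the Euclidean ball of radius σ about the origin and ∇ denotes the gradient on ℝⁿ. (This is the instance of the paper's Lemma 3.1 in which the domain is Euclidean space ℝⁿ, the CAT(1) target is Euclidean space ℝᵐ with d(u,Q) = ‖u − Q‖, and the base point of the ball is the origin with Q = u(0).) -/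
open MeasureTheory Metric Real Filter Asymptotics Topology RealInnerProductSpace

noncomputable section

/-- The partial derivative in the `i`-th coordinate direction. -/
noncomputable def pd {n : ℕ} {F : Type*} [NormedAddCommGroup F] [NormedSpace ℝ F]
    (i : Fin n) (u : EuclideanSpace ℝ (Fin n) → F) (x : EuclideanSpace ℝ (Fin n)) : F :=
  fderiv ℝ u x (EuclideanSpace.single i 1)

/-- The Laplacian: the sum of second partial derivatives. -/
noncomputable def lap {n : ℕ} (u : EuclideanSpace ℝ (Fin n) → ℝ)
    (x : EuclideanSpace ℝ (Fin n)) : ℝ :=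
  ∑ i : Fin n, pd i (pd i u) x

/-- A function is harmonic if it is smooth and its Laplacian vanishes everywhere. -/
def Harmonic {n : ℕ} (u : EuclideanSpace ℝ (Fin n) → ℝ) : Prop :=
  ContDiff ℝ (⊤ : ℕ∞) u ∧ ∀ x, lap u x = 0

/-- The pull-back tensor `π_{ij}(x) = ⟪∂ᵢu(x), ∂ⱼu(x)⟫`. -/
noncomputable def pullback {n m : ℕ} (u : EuclideanSpace ℝ (Fin n) → EuclideanSpace ℝ (Fin m))
    (i j : Fin n) (x : EuclideanSpace ℝ (Fin n)) : ℝ :=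
  ⟪pd i u x, pd j u x⟫

/-- The energy density `|∇u|²(x) = ∑ᵢ ‖∂ᵢu(x)‖²`. -/
noncomputable def energyDensity {n m : ℕ}
    (u : EuclideanSpace ℝ (Fin n) → EuclideanSpace ℝ (Fin m))
    (x : EuclideanSpace ℝ (Fin n)) : ℝ :=
  ∑ i : Fin n, ‖pd i u x‖ ^ 2

/-- The squared norm of the pull-back tensor, `|π|²(x) = ∑ᵢⱼ π_{ij}(x)²`. -/
noncomputable def pullbackNormSq {n m : ℕ}
    (u : EuclideanSpace ℝ (Fin n) → EuclideanSpace ℝ (Fin m))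
    (x : EuclideanSpace ℝ (Fin n)) : ℝ :=
  ∑ i : Fin n, ∑ j : Fin n, (pullback u i j x) ^ 2

/-!
Write `L` for the derivative of `u` at `x₀` and `L†` for its adjoint. The gradient of
`f = ‖u - u x₀‖²` is `2 (Du)† (u - u x₀)`; since `u - u x₀` vanishes at `x₀`, continuity of `Du`
at `x₀` is enough for `∇f` to be differentiable there, with derivative `2 L† L`. Hence
`‖∇f‖²` equals the quadratic form `4 ‖L† L (x - x₀)‖²` up to `o(‖x - x₀‖²)`. By invariance of the
ball under reflections, the integral of a quadratic form over a ball of radius `σ` is its trace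
times `ω σ ^ (n + 2) / (n + 2)`, and the trace of `x ↦ ‖L† L x‖²` is `∑ ⟪L bᵢ, L bⱼ⟫²`.
-/

open Module InnerProductSpace

section NormedSpace

variable {𝕜 E F G : Type*} [NontriviallyNormedField 𝕜] [NormedAddCommGroup E] [NormedSpace 𝕜 E]
  [NormedAddCommGroup F] [NormedSpace 𝕜 F] [NormedAddCommGroup G] [NormedSpace 𝕜 G]

lemma hasFDerivAt_clm_apply_of_eq_zero {c : E → F →L[𝕜] G} {h : E → F} {h' : E →L[𝕜] F} {x₀ : E}
    (hc : ContinuousAt c x₀) (hh : HasFDerivAt h h' x₀) (h0 : h x₀ = 0) :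
    HasFDerivAt (fun x => c x (h x)) (c x₀ ∘L h') x₀ := by
  have h_isBigO : h =O[𝓝 x₀] fun x => x - x₀ := by simpa [h0] using hh.isBigO_sub
  have const_coeff : HasFDerivAt (fun x => c x₀ (h x)) (c x₀ ∘L h') x₀ :=
    (c x₀).hasFDerivAt.comp x₀ hh
  have c_sub_isLittleO : (fun x => c x - c x₀) =o[𝓝 x₀] fun _ => (1 : ℝ) := by
    rw [isLittleO_one_iff, ← sub_self (c x₀)]
    exact hc.sub continuousAt_const
  have error_isLittleO : (fun x => (c x - c x₀) (h x)) =o[𝓝 x₀] fun x => x - x₀ := by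
    refine IsLittleO.of_norm_right ?_
    refine (IsBigO.of_norm_le fun x => (c x - c x₀).le_opNorm (h x)).trans_isLittleO ?_
    simpa using c_sub_isLittleO.norm_left.mul_isBigO h_isBigO.norm_norm
  refine .of_isLittleO ((const_coeff.isLittleO.add error_isLittleO).congr_left fun x => ?_)
  simp only [h0, sub_apply, map_zero]
  abel

lemma isLittleO_norm_sq_sub_norm_sq_fderiv {g : E → F} {g' : E →L[𝕜] F} {x₀ : E}
    (hg : HasFDerivAt g g' x₀) (h0 : g x₀ = 0) :
    (fun x => ‖g x‖ ^ 2 - ‖g' (x - x₀)‖ ^ 2) =o[𝓝 x₀] fun x => ‖x - x₀‖ ^ 2 := by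
  have g_isBigO : g =O[𝓝 x₀] fun x => x - x₀ := by simpa [h0] using hg.isBigO_sub
  have g'_isBigO : (fun x => g' (x - x₀)) =O[𝓝 x₀] fun x => x - x₀ := g'.isBigO_sub _ x₀
  have norm_sub_isLittleO : (fun x => ‖g x‖ - ‖g' (x - x₀)‖) =o[𝓝 x₀] fun x => ‖x - x₀‖ := by
    refine IsBigO.trans_isLittleO (.of_norm_le fun x => abs_norm_sub_norm_le _ _) ?_
    simpa [h0] using hg.isLittleO.norm_norm
  exact ((g_isBigO.norm_norm.add g'_isBigO.norm_norm).mul_isLittleO norm_sub_isLittleO).congr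
    (fun x => by ring) fun x => by ring

end NormedSpace

section BallIntegral

lemma setIntegral_ball_sub_center {E F : Type*} [NormedAddCommGroup E] [MeasurableSpace E]
    [MeasurableAdd E] [NormedAddCommGroup F] [NormedSpace ℝ F] (μ : Measure E)
    [μ.IsAddRightInvariant] (f : E → F) (x₀ : E) (σ : ℝ) :
    ∫ x in ball x₀ σ, f (x - x₀) ∂μ = ∫ x in ball 0 σ, f x ∂μ := by
  have h := (measurePreserving_sub_right μ x₀).setIntegral_preimage_emb
    (measurableEmbedding_subRight x₀) f (ball 0 σ)
  rwa [show (· - x₀) ⁻¹' ball 0 σ = ball x₀ σ by ext x; simp [dist_eq_norm]] at h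

lemma integrableOn_ball_of_continuous {X F : Type*} [MetricSpace X] [ProperSpace X]
    [MeasurableSpace X] [OpensMeasurableSpace X] [NormedAddCommGroup F] {μ : Measure X}
    [IsFiniteMeasureOnCompacts μ] {f : X → F} (hf : Continuous f) (x₀ : X) (σ : ℝ) :
    IntegrableOn f (ball x₀ σ) μ :=
  (hf.continuousOn.integrableOn_compact (isCompact_closedBall x₀ σ)).mono_set
    ball_subset_closedBall

variable {E F : Type*} [NormedAddCommGroup E] [NormedSpace ℝ E] [FiniteDimensional ℝ E]
  [MeasurableSpace E] [BorelSpace E] [NormedAddCommGroup F] [NormedSpace ℝ F]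
  (μ : Measure E) [μ.IsAddHaarMeasure]

lemma setIntegral_ball_norm_pow [Nontrivial E] (k : ℕ) {σ : ℝ} (hσ : 0 ≤ σ) :
    ∫ x in ball (0 : E) σ, ‖x‖ ^ k ∂μ =
      finrank ℝ E * μ.real (ball 0 1) / (finrank ℝ E + k) * σ ^ (finrank ℝ E + k) := by
  have radial : ∫ x in ball (0 : E) σ, ‖x‖ ^ k ∂μ =
      ∫ x, (Set.Iio σ).indicator (fun r => r ^ k) ‖x‖ ∂μ := by
    rw [← integral_indicator measurableSet_ball]
    simp [Set.indicator]
  have n_pos : 0 < finrank ℝ E := finrank_pos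
  have integrand (r : ℝ) : r ^ (finrank ℝ E - 1) • (Set.Iio σ).indicator (fun r => r ^ k) r =
      (Set.Iio σ).indicator (fun r => r ^ (finrank ℝ E - 1 + k)) r := by
    simp [Set.indicator, pow_add]
  have exponent : finrank ℝ E - 1 + k + 1 = finrank ℝ E + k := by lia
  have one_dim : ∫ r in Set.Ioi (0 : ℝ),
      r ^ (finrank ℝ E - 1) • (Set.Iio σ).indicator (fun r => r ^ k) r =
      σ ^ (finrank ℝ E + k) / (finrank ℝ E + k) := by
    simp_rw [integrand]
    rw [setIntegral_indicator measurableSet_Iio, Set.Ioi_inter_Iio, ← integral_Ioc_eq_integral_Ioo,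
      ← intervalIntegral.integral_of_le hσ, integral_pow, ← Nat.cast_add_one, exponent,
      zero_pow (by lia), sub_zero, Nat.cast_add]
  rw [radial, integral_fun_norm_addHaar, one_dim, nsmul_eq_mul, smul_eq_mul]
  ring

lemma isLittleO_setIntegral_ball {f : E → F} {x₀ : E} {k : ℕ}
    (hf : f =o[𝓝 x₀] fun x => ‖x - x₀‖ ^ k) :
    (fun σ => ∫ x in ball x₀ σ, f x ∂μ) =o[𝓝[>] 0] fun σ : ℝ => σ ^ (finrank ℝ E + k) := by
  set ω := μ.real (ball (0 : E) 1)
  have ω_pos : 0 < ω := ENNReal.toReal_pos (measure_ball_pos μ 0 one_pos).ne' measure_ball_lt_top.ne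
  refine isLittleO_iff.2 fun ε ε_pos => ?_
  obtain ⟨δ, δ_pos, f_le⟩ :=
    Metric.eventually_nhds_iff_ball.1 (isLittleO_iff.1 hf (div_pos ε_pos ω_pos))
  filter_upwards [Ioo_mem_nhdsGT δ_pos] with σ ⟨σ_pos, σ_lt⟩
  have f_le_const (x : E) (hx : x ∈ ball x₀ σ) : ‖f x‖ ≤ ε / ω * σ ^ k := by
    refine (f_le x (ball_subset_ball σ_lt.le hx)).trans ?_
    rw [norm_pow, norm_norm]
    gcongr
    exact (mem_ball_iff_norm.1 hx).le
  calc ‖∫ x in ball x₀ σ, f x ∂μ‖ ≤ ε / ω * σ ^ k * μ.real (ball x₀ σ) :=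
        norm_setIntegral_le_of_norm_le_const measure_ball_lt_top f_le_const
    _ = ε / ω * σ ^ k * (σ ^ finrank ℝ E * ω) := by
        rw [measureReal_def, Measure.addHaar_ball_of_pos μ x₀ σ_pos, ENNReal.toReal_mul,
          ENNReal.toReal_ofReal (by positivity), ← measureReal_def]
    _ = ε * ‖σ ^ (finrank ℝ E + k)‖ := by
        rw [Real.norm_of_nonneg (by positivity), pow_add]
        field_simp

end BallIntegral

section InnerProductSpace

variable {E F : Type*} [NormedAddCommGroup E] [InnerProductSpace ℝ E]
  [NormedAddCommGroup F] [InnerProductSpace ℝ F]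

section SecondMoments

variable [FiniteDimensional ℝ E] [MeasurableSpace E] [BorelSpace E]

lemma setIntegral_ball_comp_linearIsometryEquiv {E' G : Type*} [NormedAddCommGroup E']
    [InnerProductSpace ℝ E'] [FiniteDimensional ℝ E'] [MeasurableSpace E'] [BorelSpace E']
    [NormedAddCommGroup G] [NormedSpace ℝ G] (e : E ≃ₗᵢ[ℝ] E') (f : E' → G) (σ : ℝ) :
    ∫ x in ball 0 σ, f (e x) = ∫ x in ball 0 σ, f x := by
  have h := e.measurePreserving.setIntegral_preimage_emb e.toHomeomorph.measurableEmbedding f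
    (ball 0 σ)
  rwa [e.preimage_ball, map_zero] at h

lemma setIntegral_ball_inner_sq_eq_of_norm_eq {v w : E} (h : ‖v‖ = ‖w‖) (σ : ℝ) :
    ∫ x in ball 0 σ, ⟪v, x⟫ ^ 2 = ∫ x in ball 0 σ, ⟪w, x⟫ ^ 2 := by
  let ρ := (ℝ ∙ (v - w))ᗮ.reflection
  rw [← setIntegral_ball_comp_linearIsometryEquiv ρ fun x => ⟪w, x⟫ ^ 2]
  simp_rw [← show ρ v = w from Submodule.reflection_sub h, ρ.inner_map_map]

lemma finrank_mul_setIntegral_ball_inner_sq (v : E) (σ : ℝ) :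
    finrank ℝ E * ∫ x in ball 0 σ, ⟪v, x⟫ ^ 2 = ‖v‖ ^ 2 * ∫ x in ball (0 : E) σ, ‖x‖ ^ 2 := by
  let b := stdOrthonormalBasis ℝ E
  have same_moment (i) :
      ∫ x in ball 0 σ, ⟪v, x⟫ ^ 2 = ‖v‖ ^ 2 * ∫ x in ball 0 σ, ⟪b i, x⟫ ^ 2 := by
    rw [setIntegral_ball_inner_sq_eq_of_norm_eq (w := ‖v‖ • b i) (by simp [norm_smul])]
    simp_rw [real_inner_smul_left, mul_pow, integral_const_mul]
  calc finrank ℝ E * ∫ x in ball 0 σ, ⟪v, x⟫ ^ 2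
      = ∑ i, ‖v‖ ^ 2 * ∫ x in ball 0 σ, ⟪b i, x⟫ ^ 2 := by simp [← same_moment]
    _ = ‖v‖ ^ 2 * ∫ x in ball (0 : E) σ, ‖x‖ ^ 2 := by
        rw [← Finset.mul_sum, ← integral_finsetSum _ fun i _ =>
          integrableOn_ball_of_continuous (by fun_prop) 0 σ]
        simp_rw [b.sum_sq_inner_right]

lemma setIntegral_ball_inner_sq (v : E) {σ : ℝ} (hσ : 0 ≤ σ) :
    ∫ x in ball 0 σ, ⟪v, x⟫ ^ 2 =
      volume.real (ball (0 : E) 1) / (finrank ℝ E + 2) * σ ^ (finrank ℝ E + 2) * ‖v‖ ^ 2 := by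
  rcases subsingleton_or_nontrivial E with hE | hE
  · simp [Subsingleton.elim v 0]
  have n_ne : (finrank ℝ E : ℝ) ≠ 0 := by exact_mod_cast finrank_pos.ne'
  apply mul_left_cancel₀ n_ne
  rw [finrank_mul_setIntegral_ball_inner_sq, setIntegral_ball_norm_pow volume 2 hσ, Nat.cast_ofNat]
  ring

lemma setIntegral_ball_inner_mul_inner (v w : E) {σ : ℝ} (hσ : 0 ≤ σ) :
    ∫ x in ball 0 σ, ⟪v, x⟫ * ⟪w, x⟫ =
      volume.real (ball (0 : E) 1) / (finrank ℝ E + 2) * σ ^ (finrank ℝ E + 2) * ⟪v, w⟫ := by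
  have polarization (x : E) :
      ⟪v, x⟫ * ⟪w, x⟫ = (⟪v + w, x⟫ ^ 2 - ⟪v - w, x⟫ ^ 2) / 4 := by
    rw [inner_add_left, inner_sub_left]
    ring
  simp_rw [polarization]
  rw [integral_div, integral_sub (integrableOn_ball_of_continuous (by fun_prop) 0 σ)
    (integrableOn_ball_of_continuous (by fun_prop) 0 σ), setIntegral_ball_inner_sq _ hσ,
    setIntegral_ball_inner_sq _ hσ, norm_add_sq_real, norm_sub_sq_real]
  ring

lemma setIntegral_ball_norm_clm_sq {ι : Type*} [Fintype ι] (b : OrthonormalBasis ι ℝ E)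
    (T : E →L[ℝ] F) {σ : ℝ} (hσ : 0 ≤ σ) :
    ∫ x in ball 0 σ, ‖T x‖ ^ 2 =
      volume.real (ball (0 : E) 1) / (finrank ℝ E + 2) * σ ^ (finrank ℝ E + 2) *
        ∑ i, ‖T (b i)‖ ^ 2 := by
  classical
  have expansion (x : E) :
      ‖T x‖ ^ 2 = ∑ i, ∑ j, ⟪b i, x⟫ * ⟪b j, x⟫ * ⟪T (b i), T (b j)⟫ := by
    conv_lhs => rw [← b.sum_repr' x, map_sum, ← real_inner_self_eq_norm_sq, sum_inner]
    simp_rw [inner_sum, map_smul, real_inner_smul_left, real_inner_smul_right, mul_assoc]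
  simp_rw [expansion]
  rw [integral_finsetSum _ fun i _ => integrableOn_ball_of_continuous (by fun_prop) 0 σ,
    Finset.mul_sum]
  refine Finset.sum_congr rfl fun i _ => ?_
  rw [integral_finsetSum _ fun j _ => integrableOn_ball_of_continuous (by fun_prop) 0 σ]
  simp_rw [integral_mul_const, setIntegral_ball_inner_mul_inner _ _ hσ, b.inner_eq_ite]
  simp

lemma isLittleO_setIntegral_ball_norm_sq_sub {ι : Type*} [Fintype ι]
    (b : OrthonormalBasis ι ℝ E) {g : E → F} {g' : E →L[ℝ] F} {x₀ : E}
    (hg : HasFDerivAt g g' x₀) (h0 : g x₀ = 0) (hmeas : StronglyMeasurableAtFilter g (𝓝 x₀)) :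
    (fun σ : ℝ => (∫ x in ball x₀ σ, ‖g x‖ ^ 2) -
        volume.real (ball (0 : E) 1) / (finrank ℝ E + 2) * σ ^ (finrank ℝ E + 2) *
          ∑ i, ‖g' (b i)‖ ^ 2)
      =o[𝓝[>] 0] fun σ => σ ^ (finrank ℝ E + 2) := by
  have integrable : IntegrableAtFilter (fun x => ‖g x‖ ^ 2) (𝓝 x₀) :=
    (hg.continuousAt.norm.pow 2).tendsto.integrableAtFilter
      (let ⟨s, hs, hgs⟩ := hmeas; ⟨s, hs, hgs.norm.pow 2⟩) (volume.finiteAt_nhds x₀)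
  obtain ⟨s, s_mem, integrableOn_s⟩ := integrable
  obtain ⟨δ, δ_pos, ball_subset⟩ := Metric.mem_nhds_iff.1 s_mem
  refine (isLittleO_setIntegral_ball volume
    (isLittleO_norm_sq_sub_norm_sq_fderiv hg h0)).congr' ?_ .rfl
  filter_upwards [Ioo_mem_nhdsGT δ_pos] with σ ⟨σ_pos, σ_lt⟩
  rw [integral_sub (integrableOn_s.mono_set ((ball_subset_ball σ_lt.le).trans ball_subset))
    (integrableOn_ball_of_continuous (by fun_prop) x₀ σ),
    setIntegral_ball_sub_center volume (fun x => ‖g' x‖ ^ 2),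
    setIntegral_ball_norm_clm_sq b g' σ_pos.le]

end SecondMoments

section Gradient

lemma measurable_gradient {𝕜 E : Type*} [RCLike 𝕜] [NormedAddCommGroup E] [InnerProductSpace 𝕜 E]
    [CompleteSpace E] [MeasurableSpace E] [BorelSpace E] (f : E → 𝕜) : Measurable (gradient f) :=
  (toDual 𝕜 E).symm.continuous.measurable.comp (measurable_fderiv 𝕜 f)

variable [CompleteSpace E] [CompleteSpace F] {u : E → F} {x₀ : E}

lemma hasGradientAt_norm_sub_const_sq {u' : E →L[ℝ] F} (hu : HasFDerivAt u u' x₀) (Q : F) :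
    HasGradientAt (fun y => ‖u y - Q‖ ^ 2) ((2 : ℝ) • u'.adjoint (u x₀ - Q)) x₀ := by
  refine hasGradientAt_iff_hasFDerivAt.2 ((hu.sub_const Q).norm_sq.congr_fderiv ?_)
  ext v
  simp [ContinuousLinearMap.adjoint_inner_left]

lemma hasFDerivAt_gradient_norm_sub_sq (hd : ∀ᶠ x in 𝓝 x₀, DifferentiableAt ℝ u x)
    (hc : ContinuousAt (fderiv ℝ u) x₀) :
    HasFDerivAt (gradient fun y => ‖u y - u x₀‖ ^ 2)
      ((2 : ℝ) • (fderiv ℝ u x₀).adjoint ∘L fderiv ℝ u x₀) x₀ := by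
  have adjoint_cont : ContinuousAt (fun x => (fderiv ℝ u x).adjoint) x₀ :=
    ContinuousLinearMap.adjoint.continuous.continuousAt.comp hc
  have formula : (gradient fun y => ‖u y - u x₀‖ ^ 2) =ᶠ[𝓝 x₀]
      fun x => (2 : ℝ) • (fderiv ℝ u x).adjoint (u x - u x₀) := by
    filter_upwards [hd] with x hx
    exact (hasGradientAt_norm_sub_const_sq hx.hasFDerivAt (u x₀)).gradient
  exact ((hasFDerivAt_clm_apply_of_eq_zero adjoint_cont
    (hd.self_of_nhds.hasFDerivAt.sub_const (u x₀)) (sub_self _)).const_smul 2).congr_of_eventuallyEq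
    formula

lemma sum_norm_adjoint_comp_self_sq {ι : Type*} [Fintype ι] (b : OrthonormalBasis ι ℝ E)
    (L : E →L[ℝ] F) :
    ∑ i, ‖L.adjoint (L (b i))‖ ^ 2 = ∑ i, ∑ j, ⟪L (b i), L (b j)⟫ ^ 2 := by
  simp_rw [← b.sum_sq_inner_left, ContinuousLinearMap.adjoint_inner_left]

end Gradient

theorem stmt_9_general [FiniteDimensional ℝ E] [MeasurableSpace E] [BorelSpace E] [CompleteSpace F]
    {ι : Type*} [Fintype ι] (b : OrthonormalBasis ι ℝ E) {u : E → F} {x₀ : E}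
    (hd : ∀ᶠ x in 𝓝 x₀, DifferentiableAt ℝ u x) (hc : ContinuousAt (fderiv ℝ u) x₀) :
    (fun σ : ℝ =>
        (∫ x in ball x₀ σ, ‖gradient (fun y => ‖u y - u x₀‖ ^ 2) x‖ ^ 2) -
        4 * volume.real (ball (0 : E) 1) / (finrank ℝ E + 2) *
          (∑ i, ∑ j, ⟪fderiv ℝ u x₀ (b i), fderiv ℝ u x₀ (b j)⟫ ^ 2) * σ ^ (finrank ℝ E + 2))
      =o[𝓝[>] 0] fun σ => σ ^ (finrank ℝ E + 2) := by
  have gradient_zero : gradient (fun y => ‖u y - u x₀‖ ^ 2) x₀ = 0 := by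
    simpa using
      (hasGradientAt_norm_sub_const_sq hd.self_of_nhds.hasFDerivAt (u x₀)).gradient
  refine (isLittleO_setIntegral_ball_norm_sq_sub b (hasFDerivAt_gradient_norm_sub_sq hd hc)
    gradient_zero (measurable_gradient _).stronglyMeasurable.stronglyMeasurableAtFilter).congr_left
    fun σ => ?_
  simp only [smul_apply, ContinuousLinearMap.comp_apply, norm_smul, mul_pow,
    ← Finset.mul_sum, sum_norm_adjoint_comp_self_sq, Real.norm_ofNat]
  ring

end InnerProductSpace

theorem stmt_9 {n m : ℕ} (hn : 1 ≤ n) (hm : 1 ≤ m)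
    (u : EuclideanSpace ℝ (Fin n) → EuclideanSpace ℝ (Fin m))
    (husmooth : ContDiff ℝ (⊤ : ℕ∞) u)
    (Q : EuclideanSpace ℝ (Fin m)) (hQ : Q = u 0)
    (ω : ℝ) (hω : ω = (volume (ball (0 : EuclideanSpace ℝ (Fin n)) 1)).toReal) :
    (fun σ : ℝ =>
        (∫ x in ball (0 : EuclideanSpace ℝ (Fin n)) σ,
          ‖gradient (fun y => ‖u y - Q‖ ^ 2) x‖ ^ 2) -
        4 * ω / ((n : ℝ) + 2) * pullbackNormSq u 0 * σ ^ (n + 2))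
      =o[𝓝[>] (0 : ℝ)] fun σ => σ ^ (n + 2) := by
  subst hQ hω
  simpa [pullbackNormSq, pullback, pd, measureReal_def] using
    stmt_9_general (EuclideanSpace.basisFun (Fin n) ℝ)
      (.of_forall (husmooth.differentiable (by simp)))
      (husmooth.continuous_fderiv (by simp)).continuousAt
end
end

section
/- Let n, m ≥ 1, let u : ℝⁿ → ℝᵐ be a smooth map each of whose coordinate functions is harmonic (componentwise harmonic), and let x₀ ∈ ℝⁿ. Define the pull-back tensor π_{ij}(x) = ⟪∂_i u(x), ∂_j u(x)⟫, the energy density |∇u|²(x) = Σᵢ π_{ii}(x), and |π|²(x) = Σ_{i,j} π_{ij}(x)². Then the mean value inequality ⨍_{B_σ(x₀)} |∇u|² dμ ≥ |∇u|²(x₀) + ((|π|²(x₀) − (|∇u|²(x₀))²)/(n+2)) σ² + o(σ²) holds as σ → 0⁺; that is, the negative part of the difference between the left-hand side and the first two terms on the right is o(σ²). (This is the instance of the paper's Lemma 3.2, the mean value inequality for harmonic maps into a convex ball in a CAT(1) space, in which the domain manifold is flat Euclidean space ℝⁿ, so Ric ≡ 0, and the CAT(1) target is Euclidean space ℝᵐ.)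 -/
open MeasureTheory Metric Real Filter Asymptotics Topology RealInnerProductSpace

noncomputable section

/-!
A `C²` function `f` has ball averages `f x₀ + σ² / (2 (n + 2)) • Δ f x₀ + o(σ²)`: average its second
order Taylor polynomial, using that reflections make the second moments of a ball a multiple of the
identity. For `f = |∇u|²` with `u` harmonic, the flat Bochner formula `Δ |∇u|² = 2 |∇²u|²` shows
that the `σ²`-coefficient is nonnegative, whereas `|π|² ≤ |∇u|⁴` by Cauchy–Schwarz.
-/

open Module InnerProductSpace Laplacian

section Derivatives

variable {E F : Type*} [NormedAddCommGroup E] [NormedSpace ℝ E]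
  [NormedAddCommGroup F] [NormedSpace ℝ F] {f : E → F} {x : E}

lemma eventually_differentiableAt_of_contDiffAt {n : WithTop ℕ∞} (hf : ContDiffAt ℝ n f x)
    (hn : 1 ≤ n) : ∀ᶠ y in 𝓝 x, DifferentiableAt ℝ f y :=
  ((hf.of_le hn).eventually (by simp)).mono fun _ hy ↦ hy.differentiableAt one_ne_zero

lemma differentiableAt_fderiv_of_contDiffAt_two (hf : ContDiffAt ℝ 2 f x) :
    DifferentiableAt ℝ (fderiv ℝ f) x :=
  (hf.fderiv_right (m := 1) (by norm_num)).differentiableAt one_ne_zero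

lemma fderiv_fderiv_apply (hf : DifferentiableAt ℝ (fderiv ℝ f) x) (v w : E) :
    fderiv ℝ (fderiv ℝ f) x v w = fderiv ℝ (fun y ↦ fderiv ℝ f y w) x v := by
  simp [fderiv_clm_apply hf (differentiableAt_const w)]

lemma fderiv_fderiv_apply_comm (hf : ContDiffAt ℝ 2 f x) (v w : E) :
    fderiv ℝ (fun y ↦ fderiv ℝ f y w) x v = fderiv ℝ (fun y ↦ fderiv ℝ f y v) x w := by
  have hd := differentiableAt_fderiv_of_contDiffAt_two hf
  rw [← fderiv_fderiv_apply hd, ← fderiv_fderiv_apply hd]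
  exact hf.isSymmSndFDerivAt (by simp) v w

lemma contDiffAt_fderiv_apply {n m : WithTop ℕ∞} (hf : ContDiffAt ℝ n f x) (hmn : m + 1 ≤ n)
    (v : E) : ContDiffAt ℝ m (fun y ↦ fderiv ℝ f y v) x :=
  (hf.fderiv_right hmn).clm_apply contDiffAt_const

lemma taylor_two_isLittleO (hf : ContDiffAt ℝ 2 f x) :
    (fun y ↦ f y - (f x + fderiv ℝ f x (y - x) +
        (2⁻¹ : ℝ) • fderiv ℝ (fderiv ℝ f) x (y - x) (y - x)))
      =o[𝓝 x] fun y ↦ ‖y - x‖ ^ 2 := by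
  set L := fderiv ℝ f x
  set B := fderiv ℝ (fderiv ℝ f) x
  have hB : HasFDerivAt (fderiv ℝ f) B x :=
    (differentiableAt_fderiv_of_contDiffAt_two hf).hasFDerivAt
  have hsymm (v w : E) : B v w = B w v := hf.isSymmSndFDerivAt (by simp) v w
  obtain ⟨r, hr, hdiff⟩ := eventually_nhds_iff_ball.1
    (eventually_differentiableAt_of_contDiffAt hf (by norm_num))
  let R : E → F := fun y ↦ f y - (f x + L (y - x) + (2⁻¹ : ℝ) • B (y - x) (y - x))
  have hR (y : E) (hy : y ∈ ball x r) :
      HasFDerivWithinAt R (fderiv ℝ f y - L - B (y - x)) (ball x r) y := by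
    have hsub : HasFDerivAt (fun z ↦ z - x) (ContinuousLinearMap.id ℝ E) y :=
      (hasFDerivAt_id y).sub_const x
    have hlin := L.hasFDerivAt.comp y hsub
    have hquad := ((B.hasFDerivAt.comp y hsub).clm_apply hsub).const_smul (2⁻¹ : ℝ)
    refine ((hdiff y hy).hasFDerivAt.sub ((hlin.const_add (f x)).add hquad)
      |>.congr_fderiv ?_).hasFDerivWithinAt
    ext v
    have : (2⁻¹ : ℝ) • (B (y - x) v + B v (y - x)) = B (y - x) v := by
      rw [hsymm v, ← two_smul ℝ, smul_smul]; norm_num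
    simpa [sub_sub, smul_add] using this
  have hsmall : (fun y ↦ fderiv ℝ f y - L - B (y - x)) =o[𝓝[ball x r] x] fun y ↦ ‖y - x‖ ^ 1 := by
    simpa using hB.isLittleO.norm_right.mono nhdsWithin_le_nhds
  have := (convex_ball x r).isLittleO_pow_succ (mem_ball_self hr) hR hsmall
  rw [isOpen_ball.nhdsWithin_eq (mem_ball_self hr)] at this
  simpa [R] using this

end Derivatives

section Laplacian

variable {E F ι : Type*} [NormedAddCommGroup E] [InnerProductSpace ℝ E] [FiniteDimensional ℝ E]
  [Fintype ι] {x : E}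

lemma laplacian_eq_sum_fderiv_fderiv [NormedAddCommGroup F] [NormedSpace ℝ F]
    (b : OrthonormalBasis ι ℝ E) (f : E → F) (x : E) :
    Δ f x = ∑ i, fderiv ℝ (fderiv ℝ f) x (b i) (b i) := by
  simp [laplacian_eq_iteratedFDeriv_orthonormalBasis f b, iteratedFDeriv_two_apply]

lemma laplacian_eq_sum_fderiv_fderiv_apply [NormedAddCommGroup F] [NormedSpace ℝ F]
    (b : OrthonormalBasis ι ℝ E) {f : E → F} (hf : ContDiffAt ℝ 2 f x) :
    Δ f x = ∑ i, fderiv ℝ (fun y ↦ fderiv ℝ f y (b i)) x (b i) := by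
  have hd := differentiableAt_fderiv_of_contDiffAt_two hf
  simp_rw [laplacian_eq_sum_fderiv_fderiv b, fderiv_fderiv_apply hd]

lemma laplacian_fun_sum [NormedAddCommGroup F] [NormedSpace ℝ F] {κ : Type*} (s : Finset κ)
    {f : κ → E → F} (hf : ∀ k ∈ s, ContDiffAt ℝ 2 (f k) x) :
    Δ (fun y ↦ ∑ k ∈ s, f k y) x = ∑ k ∈ s, Δ (f k) x := by
  classical
  induction s using Finset.induction_on with
  | empty => simp [laplacian_eq_sum_fderiv_fderiv (stdOrthonormalBasis ℝ E)]
  | insert k s hk ih =>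
    simp only [Finset.mem_insert, forall_eq_or_imp] at hf
    simp_rw [Finset.sum_insert hk]
    rw [← ih hf.2, ← hf.1.laplacian_add (.sum hf.2)]
    rfl

lemma laplacian_fderiv_apply [NormedAddCommGroup F] [NormedSpace ℝ F]
    {u : E → F} (hu : ContDiffAt ℝ 3 u x) (v : E) :
    Δ (fun y ↦ fderiv ℝ u y v) x = fderiv ℝ (Δ u) x v := by
  let b := stdOrthonormalBasis ℝ E
  have hu2 : ∀ᶠ y in 𝓝 x, ContDiffAt ℝ 2 u y :=
    (hu.of_le (by norm_num)).eventually (by simp)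
  have hΔ : Δ u =ᶠ[𝓝 x] fun y ↦ ∑ i, fderiv ℝ (fun z ↦ fderiv ℝ u z (b i)) y (b i) :=
    hu2.mono fun y hy ↦ laplacian_eq_sum_fderiv_fderiv_apply b hy
  have hb (i) : ContDiffAt ℝ 2 (fun y ↦ fderiv ℝ u y (b i)) x :=
    contDiffAt_fderiv_apply hu (by norm_num) _
  have hcomm (i) : (fun y ↦ fderiv ℝ (fun z ↦ fderiv ℝ u z v) y (b i)) =ᶠ[𝓝 x]
      fun y ↦ fderiv ℝ (fun z ↦ fderiv ℝ u z (b i)) y v :=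
    hu2.mono fun y hy ↦ fderiv_fderiv_apply_comm hy _ _
  calc Δ (fun y ↦ fderiv ℝ u y v) x
      = ∑ i, fderiv ℝ (fun y ↦ fderiv ℝ (fun z ↦ fderiv ℝ u z v) y (b i)) x (b i) :=
        laplacian_eq_sum_fderiv_fderiv_apply b (contDiffAt_fderiv_apply hu (by norm_num) v)
    _ = ∑ i, fderiv ℝ (fun y ↦ fderiv ℝ (fun z ↦ fderiv ℝ u z (b i)) y v) x (b i) := by
        simp_rw [(hcomm _).fderiv_eq]
    _ = ∑ i, fderiv ℝ (fun y ↦ fderiv ℝ (fun z ↦ fderiv ℝ u z (b i)) y (b i)) x v := by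
        simp_rw [fderiv_fderiv_apply_comm (hb _)]
    _ = fderiv ℝ (Δ u) x v := by
        rw [hΔ.fderiv_eq, fderiv_fun_sum fun i _ ↦
          (contDiffAt_fderiv_apply (m := 1) (hb i) (by norm_num) _).differentiableAt one_ne_zero]
        simp

variable [NormedAddCommGroup F] [InnerProductSpace ℝ F]

lemma laplacian_norm_sq (b : OrthonormalBasis ι ℝ E) {v : E → F} (hv : ContDiffAt ℝ 2 v x) :
    Δ (fun y ↦ ‖v y‖ ^ 2) x = 2 * (∑ i, ‖fderiv ℝ v x (b i)‖ ^ 2 + ⟪v x, Δ v x⟫) := by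
  have hfst (w : E) : (fun y ↦ fderiv ℝ (fun z ↦ ‖v z‖ ^ 2) y w) =ᶠ[𝓝 x]
      fun y ↦ 2 * ⟪v y, fderiv ℝ v y w⟫ := by
    filter_upwards [eventually_differentiableAt_of_contDiffAt hv (by norm_num)] with y hy
    simp [hy.hasFDerivAt.norm_sq.fderiv]
  have hsnd (w : E) : fderiv ℝ (fun y ↦ fderiv ℝ (fun z ↦ ‖v z‖ ^ 2) y w) x w =
      2 * (‖fderiv ℝ v x w‖ ^ 2 + ⟪v x, fderiv ℝ (fun y ↦ fderiv ℝ v y w) x w⟫) := by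
    have hvx : DifferentiableAt ℝ v x := hv.differentiableAt two_ne_zero
    have hDv : DifferentiableAt ℝ (fun y ↦ fderiv ℝ v y w) x :=
      (contDiffAt_fderiv_apply (m := 1) hv (by norm_num) w).differentiableAt one_ne_zero
    rw [(hfst w).fderiv_eq, fderiv_const_mul (hvx.inner ℝ hDv)]
    simp [fderiv_inner_apply ℝ hvx hDv, add_comm]
  rw [laplacian_eq_sum_fderiv_fderiv_apply b (hv.norm_sq ℝ),
    laplacian_eq_sum_fderiv_fderiv_apply b hv, inner_sum, ← Finset.sum_add_distrib, Finset.mul_sum]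
  simp_rw [hsnd]

end Laplacian

lemma norm_setAverage_le_of_norm_le_const {X G : Type*} [MeasurableSpace X] [NormedAddCommGroup G]
    [NormedSpace ℝ G] {μ : Measure X} {s : Set X} {f : X → G} {C : ℝ} (hμs : μ s < ⊤) (hC : 0 ≤ C)
    (hf : ∀ x ∈ s, ‖f x‖ ≤ C) : ‖⨍ x in s, f x ∂μ‖ ≤ C := by
  rw [setAverage_eq, norm_smul, norm_inv, norm_of_nonneg measureReal_nonneg]
  exact inv_mul_le_of_le_mul₀ measureReal_nonneg hC
    (mul_comm C _ ▸ norm_setIntegral_le_of_norm_le_const hμs hf)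

lemma setAverage_ball_isLittleO {X G : Type*} [PseudoMetricSpace X] [ProperSpace X]
    [MeasurableSpace X] [NormedAddCommGroup G] [NormedSpace ℝ G] {μ : Measure X}
    [IsFiniteMeasureOnCompacts μ] {f : X → G} {x₀ : X} {k : ℕ}
    (hf : f =o[𝓝 x₀] fun x ↦ dist x x₀ ^ k) :
    (fun σ ↦ ⨍ x in ball x₀ σ, f x ∂μ) =o[𝓝[>] 0] fun σ : ℝ ↦ σ ^ k := by
  refine isLittleO_iff.2 fun ε hε ↦ ?_
  obtain ⟨r, hr, hbound⟩ := eventually_nhds_iff_ball.1 (hf.def hε)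
  filter_upwards [Ioo_mem_nhdsGT hr] with σ hσ
  refine norm_setAverage_le_of_norm_le_const measure_ball_lt_top (by positivity) fun x hx ↦ ?_
  refine (hbound x (ball_subset_ball hσ.2.le hx)).trans ?_
  have : dist x x₀ ≤ σ := (mem_ball.1 hx).le
  rw [norm_of_nonneg (by positivity), norm_of_nonneg (pow_nonneg hσ.1.le k)]
  gcongr

section Radial

variable {E : Type*} [NormedAddCommGroup E] [NormedSpace ℝ E] [FiniteDimensional ℝ E]
  [MeasurableSpace E] [BorelSpace E] (μ : Measure E) [μ.IsAddHaarMeasure]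

lemma setIntegral_ball_fun_norm [Nontrivial E] {F : Type*} [NormedAddCommGroup F] [NormedSpace ℝ F]
    (f : ℝ → F) (σ : ℝ) :
    ∫ x in ball (0 : E) σ, f ‖x‖ ∂μ =
      finrank ℝ E • μ.real (ball 0 1) • ∫ r in Set.Ioo 0 σ, r ^ (finrank ℝ E - 1) • f r := by
  have hball : (ball (0 : E) σ).indicator (fun x ↦ f ‖x‖) =
      fun x ↦ (Set.Iio σ).indicator f ‖x‖ := by
    ext x; simp [Set.indicator]
  have hIoo : (fun r : ℝ ↦ r ^ (finrank ℝ E - 1) • (Set.Iio σ).indicator f r) =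
      (Set.Iio σ).indicator fun r ↦ r ^ (finrank ℝ E - 1) • f r := by
    ext r; simp [Set.indicator]
  rw [← integral_indicator measurableSet_ball, hball, integral_fun_norm_addHaar, hIoo,
    setIntegral_indicator measurableSet_Iio, Set.Ioi_inter_Iio]

lemma setAverage_ball_norm_pow [Nontrivial E] (k : ℕ) {σ : ℝ} (hσ : 0 < σ) :
    ⨍ x in ball (0 : E) σ, ‖x‖ ^ k ∂μ = finrank ℝ E / (finrank ℝ E + k) * σ ^ k := by
  set n := finrank ℝ E
  have hn0 : 0 < n := finrank_pos
  have hradial : ∫ r in Set.Ioo 0 σ, r ^ (n - 1) • r ^ k = σ ^ (n + k) / (n + k) := by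
    have hexp : n - 1 + k + 1 = n + k := by omega
    simp_rw [smul_eq_mul, ← pow_add]
    rw [← integral_Ioc_eq_integral_Ioo, ← intervalIntegral.integral_of_le hσ.le, integral_pow]
    have hcast : ((n - 1 + k : ℕ) : ℝ) + 1 = n + k := by exact_mod_cast hexp
    rw [hexp, hcast, zero_pow (by omega), sub_zero]
  have hunit : 0 < μ.real (ball (0 : E) 1) :=
    ENNReal.toReal_pos (measure_ball_pos _ _ one_pos).ne' measure_ball_lt_top.ne
  have hvol : μ.real (ball (0 : E) σ) = σ ^ n * μ.real (ball 0 1) := by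
    rw [measureReal_def, Measure.addHaar_ball_of_pos μ 0 hσ, ENNReal.toReal_mul,
      ENNReal.toReal_ofReal (by positivity), measureReal_def]
  rw [setAverage_eq, setIntegral_ball_fun_norm μ (· ^ k), hradial, hvol, nsmul_eq_mul, smul_eq_mul,
    smul_eq_mul]
  field_simp
  ring

end Radial

section SecondMoments

variable {E G ι : Type*} [NormedAddCommGroup E] [InnerProductSpace ℝ E] [FiniteDimensional ℝ E]
  [MeasurableSpace E] [BorelSpace E] [NormedAddCommGroup G]

lemma integrableOn_ball_of_continuousOn {f : E → G} {x₀ : E} {σ : ℝ}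
    (hf : ContinuousOn f (closedBall x₀ σ)) : IntegrableOn f (ball x₀ σ) :=
  (hf.integrableOn_compact (isCompact_closedBall x₀ σ)).mono_set ball_subset_closedBall

variable [NormedSpace ℝ G]

lemma setAverage_ball_comp_sub (f : E → G) (x₀ : E) (σ : ℝ) :
    ⨍ x in ball x₀ σ, f (x - x₀) = ⨍ x in ball (0 : E) σ, f x := by
  have hpre : (· - x₀) ⁻¹' ball (0 : E) σ = ball x₀ σ := by ext; simp [dist_eq_norm]
  rw [setAverage_eq, setAverage_eq, Measure.addHaar_real_ball_center, ← hpre,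
    (measurePreserving_sub_right volume x₀).setIntegral_preimage_emb
      (measurableEmbedding_subRight x₀)]

lemma setAverage_ball_comp_linearIsometryEquiv (T : E ≃ₗᵢ[ℝ] E) (f : E → G) (σ : ℝ) :
    ⨍ x in ball (0 : E) σ, f (T x) = ⨍ x in ball (0 : E) σ, f x := by
  have hpre : T ⁻¹' ball (0 : E) σ = ball 0 σ := by ext; simp
  have hintegral := T.measurePreserving.setIntegral_preimage_emb
    T.toHomeomorph.measurableEmbedding f (ball 0 σ)
  rw [hpre] at hintegral
  rw [setAverage_eq, setAverage_eq, hintegral]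

lemma setAverage_ball_eq_zero_of_comp_eq_neg (T : E ≃ₗᵢ[ℝ] E) {f : E → G}
    (hf : ∀ x, f (T x) = -f x) (σ : ℝ) : ⨍ x in ball (0 : E) σ, f x = 0 := by
  have : IsAddTorsionFree G := .of_isTorsionFree ℝ G
  have hneg := setAverage_ball_comp_linearIsometryEquiv T f σ
  simp_rw [hf, average_neg] at hneg
  exact neg_eq_self.1 hneg

lemma setAverage_ball_norm_sq {σ : ℝ} (hσ : 0 < σ) :
    ⨍ x in ball (0 : E) σ, ‖x‖ ^ 2 = finrank ℝ E / (finrank ℝ E + 2) * σ ^ 2 := by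
  cases subsingleton_or_nontrivial E
  · simp [norm_of_subsingleton, finrank_zero_of_subsingleton]
  · simpa using setAverage_ball_norm_pow (E := E) volume 2 hσ

variable [Fintype ι] (b : OrthonormalBasis ι ℝ E)

lemma setAverage_ball_inner_sq (i : ι) {σ : ℝ} (hσ : 0 < σ) :
    ⨍ x in ball (0 : E) σ, ⟪b i, x⟫ ^ 2 = σ ^ 2 / (finrank ℝ E + 2) := by
  have hrot (j : ι) :
      ⨍ x in ball (0 : E) σ, ⟪b j, x⟫ ^ 2 = ⨍ x in ball (0 : E) σ, ⟪b i, x⟫ ^ 2 := by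
    let T := (ℝ ∙ (b j - b i))ᗮ.reflection
    have hT : T (b i) = b j := by
      rw [← Submodule.reflection_sub (v := b j) (w := b i) (by simp),
        Submodule.reflection_reflection]
    rw [← setAverage_ball_comp_linearIsometryEquiv T]
    simp_rw [← hT, LinearIsometryEquiv.inner_map_map]
  have hcard : (Fintype.card ι : ℝ) = finrank ℝ E := by rw [finrank_eq_card_basis b.toBasis]
  have hpos : (0 : ℝ) < finrank ℝ E := hcard ▸ Nat.cast_pos.2 (Fintype.card_pos_iff.2 ⟨i⟩)
  have hsum : finrank ℝ E * ⨍ x in ball (0 : E) σ, ⟪b i, x⟫ ^ 2 =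
      finrank ℝ E / (finrank ℝ E + 2) * σ ^ 2 := by
    calc finrank ℝ E * ⨍ x in ball (0 : E) σ, ⟪b i, x⟫ ^ 2
        = ∑ j, ⨍ x in ball (0 : E) σ, ⟪b j, x⟫ ^ 2 := by simp [hrot, hcard]
      _ = ⨍ x in ball (0 : E) σ, ∑ j, ⟪b j, x⟫ ^ 2 := by
        simp_rw [setAverage_eq]
        rw [integral_finsetSum _ fun j _ ↦ integrableOn_ball_of_continuousOn (by fun_prop),
          Finset.smul_sum]
      _ = finrank ℝ E / (finrank ℝ E + 2) * σ ^ 2 := by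
        simp_rw [b.sum_sq_inner_right, setAverage_ball_norm_sq hσ]
  field_simp at hsum ⊢
  linarith

lemma setAverage_ball_inner_mul_inner_of_ne {i j : ι} (hij : i ≠ j) (σ : ℝ) :
    ⨍ x in ball (0 : E) σ, ⟪b i, x⟫ * ⟪b j, x⟫ = 0 := by
  let T := (ℝ ∙ b i)ᗮ.reflection
  have hTi : T (b i) = -b i := Submodule.reflection_orthogonalComplement_singleton_eq_neg _
  have hTj : T (b j) = b j := Submodule.reflection_mem_subspace_eq_self
    (Submodule.mem_orthogonal_singleton_iff_inner_right.2 (b.inner_eq_zero hij))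
  refine setAverage_ball_eq_zero_of_comp_eq_neg T (fun x ↦ ?_) σ
  have hi : -⟪b i, T x⟫ = ⟪b i, x⟫ := by rw [← inner_neg_left, ← hTi, T.inner_map_map]
  have hj : ⟪b j, T x⟫ = ⟪b j, x⟫ := by simpa only [hTj] using T.inner_map_map (b j) x
  rw [hj, ← hi, neg_mul, neg_neg]

variable [CompleteSpace G]

lemma setAverage_ball_bilin (B : E →L[ℝ] E →L[ℝ] G) {σ : ℝ} (hσ : 0 < σ) :
    ⨍ x in ball (0 : E) σ, B x x = (σ ^ 2 / (finrank ℝ E + 2)) • ∑ i, B (b i) (b i) := by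
  classical
  have hexpand (x : E) : B x x = ∑ i, ∑ j, (⟪b i, x⟫ * ⟪b j, x⟫) • B (b i) (b j) := by
    conv_lhs => rw [← b.sum_repr' x]
    simp only [map_sum, map_smul, sum_apply, smul_apply, Finset.smul_sum, smul_smul]
    rw [Finset.sum_comm]
    simp_rw [mul_comm]
  have hmoment (i j : ι) : ⨍ x in ball (0 : E) σ, ⟪b i, x⟫ * ⟪b j, x⟫ =
      if i = j then σ ^ 2 / (finrank ℝ E + 2) else 0 := by
    split_ifs with h
    · simp_rw [← h, ← pow_two, setAverage_ball_inner_sq b i hσ]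
    · exact setAverage_ball_inner_mul_inner_of_ne b h σ
  have hintegral (i j : ι) :
      IntegrableOn (fun x ↦ (⟪b i, x⟫ * ⟪b j, x⟫) • B (b i) (b j)) (ball (0 : E) σ) :=
    integrableOn_ball_of_continuousOn (by fun_prop)
  calc ⨍ x in ball (0 : E) σ, B x x
      = ∑ i, ∑ j, (⨍ x in ball (0 : E) σ, ⟪b i, x⟫ * ⟪b j, x⟫) • B (b i) (b j) := by
        simp_rw [hexpand, setAverage_eq]
        rw [integral_finsetSum _ fun i _ ↦ integrable_finsetSum _ fun j _ ↦ hintegral i j]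
        simp_rw [integral_finsetSum _ fun j _ ↦ hintegral _ j, integral_smul_const, Finset.smul_sum,
          smul_assoc]
    _ = (σ ^ 2 / (finrank ℝ E + 2)) • ∑ i, B (b i) (b i) := by
        simp [hmoment, Finset.smul_sum]

lemma setAverage_ball_quadratic (c : G) (L : E →L[ℝ] G) (B : E →L[ℝ] E →L[ℝ] G) (x₀ : E) {σ : ℝ}
    (hσ : 0 < σ) : ⨍ x in ball x₀ σ, (c + L (x - x₀) + (2⁻¹ : ℝ) • B (x - x₀) (x - x₀)) =
      c + (σ ^ 2 / (2 * (finrank ℝ E + 2))) • ∑ i, B (b i) (b i) := by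
  have hL : ⨍ x in ball (0 : E) σ, L x = 0 :=
    setAverage_ball_eq_zero_of_comp_eq_neg (LinearIsometryEquiv.neg ℝ) (by simp) σ
  have hc : ⨍ _ in ball (0 : E) σ, c = c :=
    setAverage_const (measure_ball_pos _ _ hσ).ne' measure_ball_lt_top.ne c
  rw [setAverage_ball_comp_sub fun x ↦ c + L x + (2⁻¹ : ℝ) • B x x, setAverage_eq,
    integral_add, integral_add, integral_smul, smul_add, smul_add, ← setAverage_eq, ← setAverage_eq,
    smul_comm, ← setAverage_eq, hc, hL, setAverage_ball_bilin b B hσ, add_zero, smul_smul]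
  · congr 2; field_simp
  all_goals exact integrableOn_ball_of_continuousOn (by fun_prop)

end SecondMoments

section MeanValue

variable {E G : Type*} [NormedAddCommGroup E] [InnerProductSpace ℝ E] [FiniteDimensional ℝ E]
  [MeasurableSpace E] [BorelSpace E] [NormedAddCommGroup G] [NormedSpace ℝ G] [CompleteSpace G]

lemma setAverage_ball_sub_laplacian_isLittleO {f : E → G} {x₀ : E} (hf : ContDiffAt ℝ 2 f x₀) :
    (fun σ : ℝ ↦ (⨍ x in ball x₀ σ, f x) -
        (f x₀ + (σ ^ 2 / (2 * (finrank ℝ E + 2))) • Δ f x₀))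
      =o[𝓝[>] 0] fun σ ↦ σ ^ 2 := by
  let P : E → G := fun x ↦ f x₀ + fderiv ℝ f x₀ (x - x₀) +
    (2⁻¹ : ℝ) • fderiv ℝ (fderiv ℝ f) x₀ (x - x₀) (x - x₀)
  have hremainder : (fun σ ↦ ⨍ x in ball x₀ σ, (f x - P x)) =o[𝓝[>] 0] fun σ ↦ σ ^ 2 :=
    setAverage_ball_isLittleO (by simpa only [dist_eq_norm] using taylor_two_isLittleO hf)
  obtain ⟨r, hr, hcont⟩ := eventually_nhds_iff_ball.1
    ((hf.eventually (by simp)).mono fun _ hy ↦ hy.continuousAt)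
  refine hremainder.congr' ?_ .rfl
  filter_upwards [Ioo_mem_nhdsGT hr] with σ hσ
  have hfint : IntegrableOn f (ball x₀ σ) := integrableOn_ball_of_continuousOn fun x hx ↦
    (hcont x (closedBall_subset_ball hσ.2 hx)).continuousWithinAt
  have hPint : IntegrableOn P (ball x₀ σ) := integrableOn_ball_of_continuousOn (by fun_prop)
  rw [setAverage_eq, integral_sub hfint hPint, smul_sub, ← setAverage_eq, ← setAverage_eq,
    setAverage_ball_quadratic (stdOrthonormalBasis ℝ E) _ _ _ _ hσ.1,
    ← laplacian_eq_sum_fderiv_fderiv]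

end MeanValue

lemma sum_sum_inner_sq_le_sq_sum_norm_sq {ι F : Type*} [Fintype ι] [NormedAddCommGroup F]
    [InnerProductSpace ℝ F] (v : ι → F) :
    ∑ i, ∑ j, ⟪v i, v j⟫ ^ 2 ≤ (∑ i, ‖v i‖ ^ 2) ^ 2 := by
  rw [sq (∑ i, _), Finset.sum_mul_sum]
  gcongr with i _ j _
  rw [← mul_pow, ← sq_abs]
  gcongr
  exact abs_real_inner_le_norm _ _

lemma isLittleO_min_zero_of_eventually_le {α : Type*} {l : Filter α} {f g φ : α → ℝ}
    (hg : g =o[l] φ) (hgf : ∀ᶠ x in l, g x ≤ f x) : (fun x ↦ min 0 (f x)) =o[l] φ := by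
  refine (IsBigO.of_bound' ?_).trans_isLittleO hg
  filter_upwards [hgf] with x hx
  rw [norm_eq_abs, norm_eq_abs, abs_of_nonpos (min_le_left 0 _), neg_le]
  exact le_min (neg_nonpos.2 (abs_nonneg _)) ((neg_abs_le _).trans hx)

section Energy

variable {E F ι : Type*} [NormedAddCommGroup E] [InnerProductSpace ℝ E] [FiniteDimensional ℝ E]
  [NormedAddCommGroup F] [InnerProductSpace ℝ F] [Fintype ι] {u : E → F} {x₀ : E}

lemma laplacian_sum_norm_fderiv_sq (b : OrthonormalBasis ι ℝ E) (hu : ContDiffAt ℝ 3 u x₀)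
    (hΔ : Δ u =ᶠ[𝓝 x₀] 0) :
    Δ (fun x ↦ ∑ i, ‖fderiv ℝ u x (b i)‖ ^ 2) x₀ =
      2 * ∑ i, ∑ j, ‖fderiv ℝ (fun y ↦ fderiv ℝ u y (b i)) x₀ (b j)‖ ^ 2 := by
  have hDu (i) : ContDiffAt ℝ 2 (fun y ↦ fderiv ℝ u y (b i)) x₀ :=
    contDiffAt_fderiv_apply hu (by norm_num) (b i)
  have hharm (i) : Δ (fun y ↦ fderiv ℝ u y (b i)) x₀ = 0 := by
    rw [laplacian_fderiv_apply hu, hΔ.fderiv_eq]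
    simp
  rw [laplacian_fun_sum _ fun i _ ↦ (hDu i).norm_sq ℝ, Finset.mul_sum]
  simp_rw [laplacian_norm_sq b (hDu _), hharm, inner_zero_right, add_zero]

theorem stmt_10_general [MeasurableSpace E] [BorelSpace E] (b : OrthonormalBasis ι ℝ E)
    (hu : ContDiffAt ℝ 3 u x₀) (hΔ : Δ u =ᶠ[𝓝 x₀] 0) :
    (fun σ : ℝ ↦ min 0
        ((⨍ x in ball x₀ σ, ∑ i, ‖fderiv ℝ u x (b i)‖ ^ 2) -
          (∑ i, ‖fderiv ℝ u x₀ (b i)‖ ^ 2 +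
            (∑ i, ∑ j, ⟪fderiv ℝ u x₀ (b i), fderiv ℝ u x₀ (b j)⟫ ^ 2 -
              (∑ i, ‖fderiv ℝ u x₀ (b i)‖ ^ 2) ^ 2) / ((finrank ℝ E : ℝ) + 2) * σ ^ 2)))
      =o[𝓝[>] 0] fun σ ↦ σ ^ 2 := by
  have henergy : ContDiffAt ℝ 2 (fun x ↦ ∑ i, ‖fderiv ℝ u x (b i)‖ ^ 2) x₀ :=
    .sum fun i _ ↦ (contDiffAt_fderiv_apply hu (by norm_num) (b i)).norm_sq ℝ
  refine isLittleO_min_zero_of_eventually_le (setAverage_ball_sub_laplacian_isLittleO henergy)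
    (.of_forall fun σ ↦ sub_le_sub_left (add_le_add_right ?_ _) _)
  have hbochner : 0 ≤ Δ (fun x ↦ ∑ i, ‖fderiv ℝ u x (b i)‖ ^ 2) x₀ := by
    rw [laplacian_sum_norm_fderiv_sq b hu hΔ]
    positivity
  have hcauchy : ∑ i, ∑ j, ⟪fderiv ℝ u x₀ (b i), fderiv ℝ u x₀ (b j)⟫ ^ 2 -
      (∑ i, ‖fderiv ℝ u x₀ (b i)‖ ^ 2) ^ 2 ≤ 0 :=
    sub_nonpos.2 (sum_sum_inner_sq_le_sq_sum_norm_sq _)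
  calc _ ≤ (0 : ℝ) := mul_nonpos_of_nonpos_of_nonneg
        (div_nonpos_of_nonpos_of_nonneg hcauchy (by positivity)) (sq_nonneg σ)
    _ ≤ _ := smul_nonneg (by positivity) hbochner

end Energy

section Coordinates

variable {n m : ℕ}

lemma laplacian_eq_lap {f : EuclideanSpace ℝ (Fin n) → ℝ} {x : EuclideanSpace ℝ (Fin n)}
    (hf : ContDiffAt ℝ 2 f x) : Δ f x = lap f x := by
  simp_rw [laplacian_eq_sum_fderiv_fderiv_apply (EuclideanSpace.basisFun (Fin n) ℝ) hf,
    EuclideanSpace.basisFun_apply]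
  rfl

lemma laplacian_eq_zero_of_forall_harmonic
    {u : EuclideanSpace ℝ (Fin n) → EuclideanSpace ℝ (Fin m)}
    (hu : ∀ α, Harmonic fun x ↦ u x α) : Δ u = 0 := by
  ext x α
  have hcomp (β) : ContDiffAt ℝ 2 (fun y ↦ u y β) x := (contDiff_infty.1 (hu β).1 2).contDiffAt
  calc Δ u x α = Δ (fun y ↦ u y α) x :=
        ((contDiffAt_euclidean.2 hcomp).laplacian_CLM_comp_left
          (l := EuclideanSpace.proj α)).symm
    _ = lap (fun y ↦ u y α) x := laplacian_eq_lap (hcomp α)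
    _ = 0 := (hu α).2 x

end Coordinates

theorem stmt_10 {n m : ℕ} (hn : 1 ≤ n) (hm : 1 ≤ m)
    (u : EuclideanSpace ℝ (Fin n) → EuclideanSpace ℝ (Fin m))
    (husmooth : ContDiff ℝ (⊤ : ℕ∞) u)
    (huharm : ∀ α : Fin m, Harmonic (fun x => u x α))
    (x₀ : EuclideanSpace ℝ (Fin n)) :
    (fun σ : ℝ => min 0
        ((⨍ x in ball x₀ σ, energyDensity u x) -
          (energyDensity u x₀ +
            (pullbackNormSq u x₀ - (energyDensity u x₀) ^ 2) / ((n : ℝ) + 2) * σ ^ 2)))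
      =o[𝓝[>] (0 : ℝ)] fun σ => σ ^ 2 := by
  have hu3 : ContDiffAt ℝ 3 u x₀ := (contDiff_infty.1 husmooth 3).contDiffAt
  simpa [energyDensity, pullbackNormSq, pullback, pd] using
    stmt_10_general (EuclideanSpace.basisFun (Fin n) ℝ) hu3
      (.of_eq (laplacian_eq_zero_of_forall_harmonic huharm))
end
end
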